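/- Let n ≥ 2, 1 < p < n, 1 ≤ q ≤ ∞, let 0 ≤ l ≤ p, and set p*(l) = p(n-l)/(n-p). Then there exists a constant C > 0 such that for every smooth compactly supported f : ℝⁿ → ℝ, ‖ |x|^{-l/p*(l)} f ‖_{p*(l), q} ≤ C ‖ |∇f| ‖_{p,q}, where |x|^{-l/p*(l)} f denotes the function x ↦ |x|^{-l/p*(l)} f(x). -/

import Mathlib

open MeasureTheory Set ENNReal

/-- The distribution function `μ_f(λ) = μ{x : |f x| > λ}` of a function. -/
noncomputable def distribFn {α : Type*} [MeasurableSpace α] (μ : Measure α)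
    (f : α → ℝ) (l : ℝ≥0∞) : ℝ≥0∞ :=
  μ {x | l < ENNReal.ofReal |f x|}

/-- The decreasing rearrangement `f*(t) = inf {λ > 0 : μ_f(λ) ≤ t}`. -/
noncomputable def rearr {α : Type*} [MeasurableSpace α] (μ : Measure α)
    (f : α → ℝ) (t : ℝ) : ℝ≥0∞ :=
  sInf {l : ℝ≥0∞ | 0 < l ∧ distribFn μ f l ≤ ENNReal.ofReal t}

/-- The Lorentz `L^{p,q}` (quasi)norm
`‖f‖_{p,q} = (∫₀^∞ (t^{1/p} f*(t))^q dt/t)^{1/q}` for `q < ∞`, and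
`‖f‖_{p,∞} = sup_{t>0} t^{1/p} f*(t)`. -/
noncomputable def lorentz {α : Type*} [MeasurableSpace α] (μ : Measure α)
    (p q : ℝ≥0∞) (f : α → ℝ) : ℝ≥0∞ :=
  if q = ∞ then ⨆ t ∈ Ioi (0 : ℝ), ENNReal.ofReal t ^ p.toReal⁻¹ * rearr μ f t
  else (∫⁻ t in Ioi (0 : ℝ),
      (ENNReal.ofReal t ^ p.toReal⁻¹ * rearr μ f t) ^ q.toReal / ENNReal.ofReal t) ^ q.toReal⁻¹


section RearrBasics
variable {α : Type*} [MeasurableSpace α] {μ : Measure α} {f : α → ℝ}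

lemma distribFn_anti {a b : ℝ≥0∞} (h : a ≤ b) : distribFn μ f b ≤ distribFn μ f a :=
  measure_mono fun _ hx => lt_of_le_of_lt h hx

lemma distribFn_le_of_rearr_lt {t : ℝ} {a : ℝ≥0∞} (h : rearr μ f t < a) :
    distribFn μ f a ≤ ENNReal.ofReal t := by
  obtain ⟨b, hb, hba⟩ := sInf_lt_iff.1 h
  exact (distribFn_anti hba.le).trans hb.2

lemma rearr_le {t : ℝ} {a : ℝ≥0∞} (ha : 0 < a) (h : distribFn μ f a ≤ ENNReal.ofReal t) :
    rearr μ f t ≤ a := sInf_le ⟨ha, h⟩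

lemma lt_distribFn {t : ℝ} {a : ℝ≥0∞} (ha : 0 < a) (h : a < rearr μ f t) :
    ENNReal.ofReal t < distribFn μ f a := by
  by_contra hc
  exact absurd (rearr_le ha (not_lt.1 hc)) (not_le.2 h)

lemma rearr_anti : Antitone (rearr μ f) := fun _ _ hst =>
  sInf_le_sInf fun _ ha => ⟨ha.1, ha.2.trans (ENNReal.ofReal_le_ofReal hst)⟩

lemma distribFn_rearr_le (t : ℝ) : distribFn μ f (rearr μ f t) ≤ ENNReal.ofReal t := by
  by_cases htop : rearr μ f t = ⊤
  · simp [htop, distribFn]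
  obtain ⟨u, hu, hu1, hu2⟩ := exists_seq_strictAnti_tendsto' (lt_top_iff_ne_top.2 htop)
  have : {x | rearr μ f t < ENNReal.ofReal |f x|} = ⋃ k, {x | u k < ENNReal.ofReal |f x|} := by
    ext x
    simp only [mem_ofPred_eq, mem_iUnion]
    constructor
    · intro hx
      exact (hu2.eventually_lt_const hx).exists
    · rintro ⟨k, hk⟩
      exact (hu1 k).1.trans hk
  unfold distribFn at *
  rw [this, Monotone.measure_iUnion]
  · exact iSup_le fun k => distribFn_le_of_rearr_lt (hu1 k).1
  · intro i j hij x hx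
    exact lt_of_le_of_lt (hu.antitone hij) hx

lemma setLIntegral_le_rearr (hf : Measurable f) {T : ℝ} (hT : 0 < T) {E : Set α}
    (hE : MeasurableSet E) (hμE : μ E ≤ ENNReal.ofReal T) :
    ∫⁻ x in E, ENNReal.ofReal |f x| ∂μ ≤
      ∑' j : ℕ, ENNReal.ofReal (2 * T / 2 ^ j) * rearr μ f (T / 2 ^ j) := by
  have hm : ∀ l : ℝ≥0∞, MeasurableSet {x | l < ENNReal.ofReal |f x|} := fun l =>
    measurableSet_lt measurable_const (by fun_prop)
  let S : ℕ → Set α := fun j => match j with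
    | 0 => E
    | i + 1 => {x | rearr μ f (T / 2 ^ i) < ENNReal.ofReal |f x|}
  have hS : ∀ j, MeasurableSet (S j) := by
    intro j
    cases j with
    | zero => exact hE
    | succ i => exact hm _
  have hμS : ∀ j, μ (S j) ≤ ENNReal.ofReal (2 * T / 2 ^ j) := by
    intro j
    cases j with
    | zero => exact hμE.trans (ENNReal.ofReal_le_ofReal (by simp; linarith))
    | succ i =>
      refine (distribFn_rearr_le (T / 2 ^ i)).trans (ENNReal.ofReal_le_ofReal (le_of_eq ?_))
      rw [pow_succ]; field_simp
  have hnull : μ (⋂ j : ℕ, {x | rearr μ f (T / 2 ^ j) < ENNReal.ofReal |f x|}) = 0 := by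
    have h1 : Filter.Tendsto (fun j : ℕ => ENNReal.ofReal (T / 2 ^ j)) Filter.atTop (nhds 0) := by
      have : Filter.Tendsto (fun j : ℕ => T / 2 ^ j) Filter.atTop (nhds 0) := by
        have := (tendsto_pow_atTop_nhds_zero_of_lt_one (r := (1/2 : ℝ)) (by norm_num)
          (by norm_num)).const_mul T
        simpa [div_eq_mul_inv] using this
      simpa using ENNReal.tendsto_ofReal this
    refine le_antisymm (ge_of_tendsto' h1 fun j => ?_) bot_le
    exact (measure_mono (iInter_subset _ j)).trans (distribFn_rearr_le _)
  have hae : ∀ᵐ x ∂μ, ∃ j : ℕ, ENNReal.ofReal |f x| ≤ rearr μ f (T / 2 ^ j) := by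
    rw [ae_iff]
    convert hnull using 2
    ext x; simp
  calc ∫⁻ x in E, ENNReal.ofReal |f x| ∂μ
      = ∫⁻ x, E.indicator (fun x => ENNReal.ofReal |f x|) x ∂μ := (lintegral_indicator hE _).symm
    _ ≤ ∫⁻ x, ∑' j : ℕ, (S j).indicator (fun _ => rearr μ f (T / 2 ^ j)) x ∂μ := by
        refine lintegral_mono_ae ?_
        filter_upwards [hae] with x hx
        classical
        by_cases hxE : x ∈ E
        swap
        · simp [hxE]
        rw [indicator_of_mem hxE]
        have h1 := Nat.find_spec hx
        have h2 := fun m => @Nat.find_min _ _ hx m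
        generalize Nat.find hx = j at h1 h2
        refine le_trans ?_ (ENNReal.le_tsum j)
        rw [indicator_of_mem]
        · exact h1
        · cases j with
          | zero => exact hxE
          | succ i => exact not_le.1 (h2 i (Nat.lt_succ_self i))
    _ = ∑' j : ℕ, rearr μ f (T / 2 ^ j) * μ (S j) := by
        rw [lintegral_tsum]
        · congr 1; ext j
          rw [lintegral_indicator (hS j), setLIntegral_const]
        · intro j
          exact (measurable_const.indicator (hS j)).aemeasurable
    _ ≤ _ := by
        refine ENNReal.tsum_le_tsum fun j => ?_
        rw [mul_comm]
        gcongr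
        exact hμS j

end RearrBasics

section Psi

noncomputable def psiFn (a e y : ℝ) : ℝ :=
  √((max (y - a) 0) ^ 2 + (max (-y - a) 0) ^ 2 + e ^ 2) - e

lemma hasDerivAt_max_sq (y : ℝ) : HasDerivAt (fun y : ℝ => (max y 0) ^ 2) (2 * max y 0) y := by
  rcases lt_trichotomy y 0 with h | h | h
  · rw [max_eq_right h.le]
    have : (fun y : ℝ => (max y 0) ^ 2) =ᶠ[nhds y] fun _ => 0 := by
      filter_upwards [gt_mem_nhds h] with z hz
      rw [max_eq_right hz.le]; simp
    simpa using (hasDerivAt_const y (0:ℝ)).congr_of_eventuallyEq this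
  · subst h
    simp only [max_self, mul_zero]
    rw [hasDerivAt_iff_isLittleO_nhds_zero]
    have h1 : (fun h : ℝ => (max (0 + h) 0) ^ 2 - (max (0:ℝ) 0) ^ 2 - h • (0:ℝ)) =O[nhds 0]
        fun h : ℝ => h ^ 2 := by
      refine Asymptotics.IsBigO.of_bound 1 (Filter.Eventually.of_forall fun h => ?_)
      simp only [zero_add, max_self, smul_zero, sub_zero, norm_pow, one_mul, Real.norm_eq_abs]
      simp only [ne_eq, OfNat.ofNat_ne_zero, not_false_eq_true, zero_pow, sub_zero, abs_pow]
      rcases le_total h 0 with hh | hh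
      · rw [max_eq_right hh]; simp; positivity
      · rw [max_eq_left hh]
    refine h1.trans_isLittleO ?_
    simpa using Asymptotics.isLittleO_pow_id (𝕜 := ℝ) (n := 2) (by norm_num)
  · rw [max_eq_left h.le]
    have : (fun y : ℝ => (max y 0) ^ 2) =ᶠ[nhds y] fun y => y ^ 2 := by
      filter_upwards [lt_mem_nhds h] with z hz
      rw [max_eq_left hz.le]
    simpa using (hasDerivAt_pow 2 y).congr_of_eventuallyEq this

lemma hasDerivAt_psiFn (a e y : ℝ) (he : 0 < e) : HasDerivAt (psiFn a e)
    ((max (y - a) 0 - max (-y - a) 0) /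
      √((max (y - a) 0) ^ 2 + (max (-y - a) 0) ^ 2 + e ^ 2)) y := by
  have h1 : HasDerivAt (fun y : ℝ => (max (y - a) 0) ^ 2) (2 * max (y - a) 0) y := by
    have := (hasDerivAt_max_sq (y - a)).comp y ((hasDerivAt_id y).sub_const a)
    simpa [Function.comp_def] using this
  have h2 : HasDerivAt (fun y : ℝ => (max (-y - a) 0) ^ 2) (-(2 * max (-y - a) 0)) y := by
    have := (hasDerivAt_max_sq (-y - a)).comp y ((hasDerivAt_id y).neg.sub_const a)
    simpa [Function.comp_def] using this
  have h3 := (((h1.add h2).add_const (e ^ 2)).sqrt (by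
    simp only [Pi.add_apply]; positivity)).sub_const e
  rw [← mul_neg, ← mul_add, mul_div_mul_left _ _ two_ne_zero, ← sub_eq_add_neg] at h3
  exact h3

lemma contDiff_psiFn (a e : ℝ) (he : 0 < e) : ContDiff ℝ 1 (psiFn a e) := by
  rw [contDiff_one_iff_deriv]
  refine ⟨fun y => (hasDerivAt_psiFn a e y he).differentiableAt, ?_⟩
  have : deriv (psiFn a e) = fun y => ((max (y - a) 0 - max (-y - a) 0) /
      √((max (y - a) 0) ^ 2 + (max (-y - a) 0) ^ 2 + e ^ 2)) := by
    ext y; exact (hasDerivAt_psiFn a e y he).deriv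
  rw [this]
  refine Continuous.div (by fun_prop) (by fun_prop) fun y => ?_
  positivity

lemma abs_deriv_psiFn_le (a e y : ℝ) (he : 0 < e) : |deriv (psiFn a e) y| ≤ 1 := by
  rw [(hasDerivAt_psiFn a e y he).deriv, abs_div, abs_of_nonneg (Real.sqrt_nonneg _)]
  apply div_le_one_of_le₀ _ (Real.sqrt_nonneg _)
  apply Real.abs_le_sqrt
  have h1 : 0 ≤ max (y - a) 0 := le_max_right _ _
  have h2 : 0 ≤ max (-y - a) 0 := le_max_right _ _
  nlinarith [mul_nonneg h1 h2, sq_nonneg e]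

lemma deriv_psiFn_eq_zero (a e y : ℝ) (he : 0 < e) (h : |y| ≤ a) : deriv (psiFn a e) y = 0 := by
  rw [(hasDerivAt_psiFn a e y he).deriv]
  have := abs_le.1 h
  rw [max_eq_right (by linarith), max_eq_right (by linarith)]; simp

lemma psiFn_zero (a e : ℝ) (ha : 0 ≤ a) (he : 0 < e) : psiFn a e 0 = 0 := by
  unfold psiFn
  rw [max_eq_right (by linarith), max_eq_right (by linarith)]
  simp [Real.sqrt_sq he.le]

lemma le_psiFn (a e y : ℝ) : |y| - a - e ≤ psiFn a e y := by
  unfold psiFn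
  gcongr
  have h1 := le_max_left (y - a) 0
  have h2 := le_max_left (-y - a) 0
  have h3 := le_max_right (y - a) 0
  have h4 := le_max_right (-y - a) 0
  rcases abs_cases y with ⟨h, _⟩ | ⟨h, _⟩
  · refine (by linarith : |y| - a ≤ max (y - a) 0).trans (Real.le_sqrt_of_sq_le ?_)
    nlinarith [sq_nonneg e, sq_nonneg (max (-y - a) 0)]
  · refine (by linarith : |y| - a ≤ max (-y - a) 0).trans (Real.le_sqrt_of_sq_le ?_)
    nlinarith [sq_nonneg e, sq_nonneg (max (y - a) 0)]

end Psi

section Sobolev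

lemma level_sobolev (n : ℕ) (hn : 2 ≤ n) : ∃ C : NNReal, ∀ f : EuclideanSpace ℝ (Fin n) → ℝ,
    ContDiff ℝ (⊤ : ℕ∞) f → HasCompactSupport f → ∀ a e b : ℝ, 0 ≤ a → 0 < e → a + e ≤ b →
    ENNReal.ofReal (b - a - e) * distribFn volume f (ENNReal.ofReal b) ^ (1 - (n : ℝ)⁻¹) ≤
      C * ∫⁻ x in {x | ENNReal.ofReal a < ENNReal.ofReal |f x|},
        ENNReal.ofReal |‖gradient f x‖| := by
  have hn' : (2 : ℝ) ≤ n := by exact_mod_cast hn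
  set r : ℝ := n / (n - 1) with hr
  have hr0 : 0 < r := by apply div_pos <;> linarith
  have hrinv : r⁻¹ = 1 - (n : ℝ)⁻¹ := by
    rw [hr, inv_div]; field_simp
  have hconj : Real.HolderConjugate (Module.finrank ℝ (EuclideanSpace ℝ (Fin n))) r := by
    rw [finrank_euclideanSpace_fin]
    exact Real.HolderConjugate.conjExponent (by linarith)
  set K := lintegralPowLePowLIntegralFDerivConst
    (volume : Measure (EuclideanSpace ℝ (Fin n))) r with hK
  refine ⟨K ^ r⁻¹, fun f hf hfc a e b ha he hab => ?_⟩
  set u : EuclideanSpace ℝ (Fin n) → ℝ := fun x => psiFn a e (f x) with hu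
  have hf1 : ContDiff ℝ 1 f := hf.of_le (by exact_mod_cast le_top)
  have hu1 : ContDiff ℝ 1 u := (contDiff_psiFn a e he).comp hf1
  have hu2 : HasCompactSupport u := hfc.comp_left (psiFn_zero a e ha he)
  have key := lintegral_pow_le_pow_lintegral_fderiv volume hu1 hu2 hconj
  rw [← hK] at key
  have hmeas : ∀ l : ℝ≥0∞, MeasurableSet {x | l < ENNReal.ofReal |f x|} := fun l =>
    measurableSet_lt measurable_const (by have := hf.continuous.measurable; fun_prop)
  have hgrad : ∫⁻ x, ‖fderiv ℝ u x‖ₑ ≤ ∫⁻ x in {x | ENNReal.ofReal a < ENNReal.ofReal |f x|},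
        ENNReal.ofReal |‖gradient f x‖| := by
    rw [← lintegral_indicator (hmeas _)]
    refine lintegral_mono fun x => ?_
    have hd : HasFDerivAt u (deriv (psiFn a e) (f x) • fderiv ℝ f x) x :=
      HasDerivAt.comp_hasFDerivAt x
        ((hasDerivAt_psiFn a e (f x) he).differentiableAt.hasDerivAt)
        ((hf1.differentiable (by norm_num)) x).hasFDerivAt
    rw [hd.fderiv]
    by_cases hx : ENNReal.ofReal a < ENNReal.ofReal |f x|
    · rw [indicator_of_mem (by exact hx), abs_of_nonneg (norm_nonneg _)]
      have : ‖gradient f x‖ = ‖fderiv ℝ f x‖ := by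
        simp [gradient]
      rw [this, ← ofReal_norm]
      apply ENNReal.ofReal_le_ofReal
      rw [norm_smul, Real.norm_eq_abs]
      exact mul_le_of_le_one_left (norm_nonneg _) (abs_deriv_psiFn_le a e _ he)
    · rw [deriv_psiFn_eq_zero a e _ he]
      · rw [← ofReal_norm, zero_smul, norm_zero]
        simp
      · by_contra hc
        exact hx ((ENNReal.ofReal_lt_ofReal_iff_of_nonneg ha).2 (not_le.1 hc))
  set I := ∫⁻ x in {x | ENNReal.ofReal a < ENNReal.ofReal |f x|},
        ENNReal.ofReal |‖gradient f x‖| with hI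
  have hmark : ENNReal.ofReal (b - a - e) ^ r * distribFn volume f (ENNReal.ofReal b) ≤
      ∫⁻ x, ‖u x‖ₑ ^ r := by
    rw [distribFn, ← setLIntegral_const]
    refine le_trans (setLIntegral_mono' (hmeas _) (fun x hx => ?_)) (setLIntegral_le_lintegral _ _)
    have hx' : b < |f x| := (ENNReal.ofReal_lt_ofReal_iff_of_nonneg (by linarith)).1 hx
    gcongr
    rw [← ofReal_norm]
    apply ENNReal.ofReal_le_ofReal
    have := le_psiFn a e (f x)
    refine le_trans ?_ (Real.le_norm_self _)
    simp only [hu]; linarith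
  have h1 : ENNReal.ofReal (b - a - e) ^ r * distribFn volume f (ENNReal.ofReal b) ≤ K * I ^ r :=
    hmark.trans (key.trans (by gcongr))
  have h2 := ENNReal.rpow_le_rpow h1 (inv_nonneg.2 hr0.le)
  rw [ENNReal.mul_rpow_of_nonneg _ _ (inv_nonneg.2 hr0.le),
    ENNReal.mul_rpow_of_nonneg _ _ (inv_nonneg.2 hr0.le), ← ENNReal.rpow_mul, ← ENNReal.rpow_mul,
    mul_inv_cancel₀ hr0.ne', ENNReal.rpow_one, ENNReal.rpow_one] at h2
  rw [ENNReal.coe_rpow_of_nonneg _ (inv_nonneg.2 hr0.le), ← hrinv]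
  exact h2

lemma measurable_norm_gradient {n : ℕ} {f : EuclideanSpace ℝ (Fin n) → ℝ}
    (hf : ContDiff ℝ (⊤ : ℕ∞) f) : Measurable fun x => ‖gradient f x‖ := by
  have h : (fun x => ‖gradient f x‖) = fun x => ‖fderiv ℝ f x‖ := by
    ext x; simp [gradient]
  rw [h]
  exact (hf.continuous_fderiv (by simp)).norm.measurable

lemma rearr_step (n : ℕ) (hn : 2 ≤ n) : ∃ C : NNReal, ∀ f : EuclideanSpace ℝ (Fin n) → ℝ,
    ContDiff ℝ (⊤ : ℕ∞) f → HasCompactSupport f → ∀ t : ℝ, 0 < t →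
    rearr volume f t ≤ rearr volume f (2 * t) + C * ENNReal.ofReal t ^ ((n : ℝ)⁻¹ - 1) *
      ∑' j : ℕ, ENNReal.ofReal (2 * (2 * t) / 2 ^ j) *
        rearr volume (fun x => ‖gradient f x‖) (2 * t / 2 ^ j) := by
  obtain ⟨C, hC⟩ := level_sobolev n hn
  refine ⟨C, fun f hf hfc t ht => ?_⟩
  have ht' : ENNReal.ofReal t ≠ 0 := by simpa using ht
  have hexp : 0 ≤ 1 - (n : ℝ)⁻¹ := by
    have : (1 : ℝ) ≤ n := by exact_mod_cast (by omega : 1 ≤ n)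
    have := inv_le_one_of_one_le₀ this
    linarith
  have hmeas : ∀ l : ℝ≥0∞, MeasurableSet {x | l < ENNReal.ofReal |f x|} := fun l =>
    measurableSet_lt measurable_const (by have := hf.continuous.measurable; fun_prop)
  refine ENNReal.le_of_forall_nnreal_lt fun b hb => ?_
  refine ENNReal.le_of_forall_pos_le_add fun d hd hfin => ?_
  have hfin1 : rearr volume f (2 * t) ≠ ⊤ := (lt_of_le_of_lt le_self_add hfin).ne
  set S := ∑' j : ℕ, ENNReal.ofReal (2 * (2 * t) / 2 ^ j) *
        rearr volume (fun x => ‖gradient f x‖) (2 * t / 2 ^ j) with hS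
  obtain ⟨R, hR⟩ : ∃ R : NNReal, (R : ℝ≥0∞) = rearr volume f (2 * t) :=
    ⟨_, ENNReal.coe_toNNReal hfin1⟩
  set e : NNReal := d / 2 with he
  have he0 : 0 < e := by positivity
  have hd2 : d = e + e := by rw [he]; exact (add_halves d).symm
  set a : NNReal := R + e with ha
  by_cases hab : a + e ≤ b
  swap
  · have : (b : ℝ≥0∞) ≤ R + d := by
      rw [hd2]; rw [ha] at hab; push Not at hab
      rw [add_assoc] at hab
      exact_mod_cast hab.le
    refine this.trans ?_
    rw [← hR]
    gcongr
    exact le_self_add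
  have hb0 : 0 < b := lt_of_lt_of_le (by positivity) hab
  have h1 := hC f hf hfc a e b a.2 he0 (by exact_mod_cast hab)
  have h2 : ENNReal.ofReal t ≤ distribFn volume f (ENNReal.ofReal b) := by
    rw [ENNReal.ofReal_coe_nnreal]
    exact (lt_distribFn (by exact_mod_cast hb0) hb).le
  have h3 : volume {x | ENNReal.ofReal a < ENNReal.ofReal |f x|} ≤ ENNReal.ofReal (2 * t) := by
    apply distribFn_le_of_rearr_lt
    rw [← hR, ENNReal.ofReal_coe_nnreal]
    exact_mod_cast (lt_add_of_pos_right R he0)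
  have h4 := setLIntegral_le_rearr (μ := volume) (measurable_norm_gradient hf)
    (by positivity : 0 < 2 * t) (hmeas _) h3
  rw [← hS] at h4
  have h5 : ENNReal.ofReal (b - a - e) * ENNReal.ofReal t ^ (1 - (n : ℝ)⁻¹) ≤ C * S :=
    le_trans (by gcongr) (h1.trans (by gcongr))
  have h6 : ENNReal.ofReal (b - a - e) ≤ C * ENNReal.ofReal t ^ ((n : ℝ)⁻¹ - 1) * S := by
    have h7 : ENNReal.ofReal t ^ (1 - (n : ℝ)⁻¹) * ENNReal.ofReal t ^ ((n : ℝ)⁻¹ - 1) = 1 := by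
      rw [← ENNReal.rpow_add _ _ ht' ENNReal.ofReal_ne_top]; simp
    calc ENNReal.ofReal (b - a - e) = ENNReal.ofReal (b - a - e) *
          ENNReal.ofReal t ^ (1 - (n : ℝ)⁻¹) * ENNReal.ofReal t ^ ((n : ℝ)⁻¹ - 1) := by
          rw [mul_assoc, h7, mul_one]
      _ ≤ C * S * ENNReal.ofReal t ^ ((n : ℝ)⁻¹ - 1) := by gcongr
      _ = _ := by ring
  calc (b : ℝ≥0∞) = ENNReal.ofReal (a + e + (b - a - e)) := by
        rw [← ENNReal.ofReal_coe_nnreal]; congr 1; ring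
    _ = (R + d) + ENNReal.ofReal (b - a - e) := by
        have : (a : ℝ) + e ≤ b := by exact_mod_cast hab
        rw [ENNReal.ofReal_add (by positivity) (by linarith)]
        congr 1
        rw [hd2, ha, ← NNReal.coe_add, ENNReal.ofReal_coe_nnreal]
        push_cast; ring
    _ ≤ (R + d) + C * ENNReal.ofReal t ^ ((n : ℝ)⁻¹ - 1) * S := by gcongr
    _ = _ := by rw [← hR]; ring

lemma rearr_eq_zero_of_large {n : ℕ} {f : EuclideanSpace ℝ (Fin n) → ℝ}
    (hfc : HasCompactSupport f) {t : ℝ} (ht : 0 < t) :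
    ∃ N : ℕ, rearr volume f (2 ^ N * t) = 0 := by
  have hfin : volume (tsupport f) ≠ ⊤ := hfc.isCompact.measure_lt_top.ne
  obtain ⟨N, hN⟩ := pow_unbounded_of_one_lt ((volume (tsupport f)).toReal / t) one_lt_two
  refine ⟨N, le_antisymm (le_of_forall_gt_imp_ge_of_dense fun a ha => rearr_le ha ?_) bot_le⟩
  have : distribFn volume f a ≤ volume (tsupport f) := by
    refine measure_mono fun x hx => subset_tsupport f ?_
    intro h0
    have hx' : a < ENNReal.ofReal |f x| := hx
    simp [h0] at hx'
  refine this.trans ?_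
  rw [← ENNReal.ofReal_toReal hfin]
  apply ENNReal.ofReal_le_ofReal
  rw [div_lt_iff₀ ht] at hN
  exact hN.le

lemma rearr_sum (n : ℕ) (hn : 2 ≤ n) : ∃ C : NNReal, ∀ f : EuclideanSpace ℝ (Fin n) → ℝ,
    ContDiff ℝ (⊤ : ℕ∞) f → HasCompactSupport f → ∀ t : ℝ, 0 < t →
    rearr volume f t ≤ ∑' k : ℕ, (C * ENNReal.ofReal (2 ^ k * t) ^ ((n : ℝ)⁻¹ - 1) *
      ∑' j : ℕ, ENNReal.ofReal (2 * (2 * (2 ^ k * t)) / 2 ^ j) *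
        rearr volume (fun x => ‖gradient f x‖) (2 * (2 ^ k * t) / 2 ^ j)) := by
  obtain ⟨C, hC⟩ := rearr_step n hn
  refine ⟨C, fun f hf hfc t ht => ?_⟩
  set R : ℕ → ℝ≥0∞ := fun k => (C * ENNReal.ofReal (2 ^ k * t) ^ ((n : ℝ)⁻¹ - 1) *
      ∑' j : ℕ, ENNReal.ofReal (2 * (2 * (2 ^ k * t)) / 2 ^ j) *
        rearr volume (fun x => ‖gradient f x‖) (2 * (2 ^ k * t) / 2 ^ j)) with hR
  have h : ∀ N : ℕ, rearr volume f t ≤ rearr volume f (2 ^ N * t) + ∑ k ∈ Finset.range N, R k := by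
    intro N
    induction N with
    | zero => simp
    | succ N ih =>
      refine ih.trans ?_
      have := hC f hf hfc (2 ^ N * t) (by positivity)
      rw [Finset.sum_range_succ]
      have e1 : (2:ℝ) ^ (N + 1) * t = 2 * (2 ^ N * t) := by ring
      rw [e1]
      calc _ ≤ (rearr volume f (2 * (2 ^ N * t)) + R N) + ∑ k ∈ Finset.range N, R k := by
            gcongr
        _ = _ := by ring
  obtain ⟨N, hN⟩ := rearr_eq_zero_of_large hfc ht
  refine (h N).trans ?_
  rw [hN, zero_add]
  exact ENNReal.sum_le_tsum _

end Sobolev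

section Weight

lemma rearr_weight (n : ℕ) (hn : 2 ≤ n) (s : ℝ) (hs : 0 ≤ s) : ∃ K : NNReal,
    ∀ f : EuclideanSpace ℝ (Fin n) → ℝ, ∀ t : ℝ, 0 < t →
    rearr volume (fun x => ‖x‖ ^ (-s) * f x) t ≤
      K * ENNReal.ofReal t ^ (-(s / n)) * rearr volume f (t / 2) := by
  haveI : Nonempty (Fin n) := ⟨⟨0, by omega⟩⟩
  have hn0 : (n : ℝ) ≠ 0 := by exact_mod_cast (by omega : n ≠ 0)
  set w : ℝ := (volume (Metric.ball (0 : EuclideanSpace ℝ (Fin n)) 1)).toReal with hw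
  have hwfin : volume (Metric.ball (0 : EuclideanSpace ℝ (Fin n)) 1) ≠ ⊤ :=
    measure_ball_lt_top.ne
  have hw0 : 0 < w := ENNReal.toReal_pos (Metric.measure_ball_pos _ _ one_pos).ne' hwfin
  refine ⟨((2 * w) ^ (s / n)).toNNReal, fun f t ht => ?_⟩
  set r : ℝ := (t / (2 * w)) ^ (n : ℝ)⁻¹ with hr
  have hr0 : 0 < r := by positivity
  have hball : volume (Metric.ball (0 : EuclideanSpace ℝ (Fin n)) r) = ENNReal.ofReal (t / 2) := by
    rw [Measure.addHaar_ball _ _ hr0.le, ← ENNReal.ofReal_toReal hwfin, ← hw,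
      ← ENNReal.ofReal_mul (by positivity), finrank_euclideanSpace_fin]
    congr 1
    rw [hr, ← Real.rpow_natCast, ← Real.rpow_mul (by positivity), inv_mul_cancel₀ hn0,
      Real.rpow_one]
    field_simp
  set a : ℝ := r ^ (-s) with ha
  have ha0 : 0 < a := by positivity
  have haK : (((2 * w) ^ (s / n)).toNNReal : ℝ≥0∞) * ENNReal.ofReal t ^ (-(s / n)) =
      ENNReal.ofReal a := by
    rw [ENNReal.ofReal_rpow_of_pos ht]
    change ENNReal.ofReal _ * _ = _
    rw [← ENNReal.ofReal_mul (by positivity)]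
    congr 1
    rw [ha, hr, ← Real.rpow_mul (by positivity), Real.div_rpow ht.le (by positivity)]
    have : (n : ℝ)⁻¹ * -s = -(s / n) := by ring
    rw [this, Real.rpow_neg (by positivity : 0 ≤ 2 * w)]
    field_simp
  rw [haK]
  have ha1 : ENNReal.ofReal a ≠ 0 := by simpa using ha0
  rw [← ENNReal.div_le_iff' ha1 ENNReal.ofReal_ne_top]
  refine le_of_forall_gt_imp_ge_of_dense fun b hb => ?_
  rw [ENNReal.div_le_iff' ha1 ENNReal.ofReal_ne_top]
  have hb0 : 0 < b := lt_of_le_of_lt bot_le hb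
  refine rearr_le (ENNReal.mul_pos ha1 hb0.ne') ?_
  have hsub : {x | ENNReal.ofReal a * b < ENNReal.ofReal |‖x‖ ^ (-s) * f x|} ⊆
      Metric.ball (0 : EuclideanSpace ℝ (Fin n)) r ∪ {x | b < ENNReal.ofReal |f x|} := by
    intro x hx
    by_cases hxr : ‖x‖ < r
    · left; simpa using hxr
    · right
      have hxr' : r ≤ ‖x‖ := not_lt.1 hxr
      have hx' : ENNReal.ofReal a * b < ENNReal.ofReal |‖x‖ ^ (-s) * f x| := hx
      have h1 : |‖x‖ ^ (-s) * f x| ≤ a * |f x| := by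
        rw [abs_mul, abs_of_nonneg (by positivity : 0 ≤ ‖x‖ ^ (-s))]
        gcongr
        exact Real.rpow_le_rpow_of_nonpos hr0 hxr' (by linarith)
      have h2 := lt_of_lt_of_le hx' (ENNReal.ofReal_le_ofReal h1)
      rw [ENNReal.ofReal_mul ha0.le] at h2
      exact lt_of_mul_lt_mul_left' h2
  calc distribFn volume _ _ ≤ volume (Metric.ball (0 : EuclideanSpace ℝ (Fin n)) r) +
        volume {x | b < ENNReal.ofReal |f x|} := (measure_mono hsub).trans (measure_union_le _ _)
    _ ≤ ENNReal.ofReal (t / 2) + ENNReal.ofReal (t / 2) := by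
        rw [hball]; gcongr
        exact distribFn_le_of_rearr_lt hb
    _ = ENNReal.ofReal t := by
        rw [← ENNReal.ofReal_add (by positivity) (by positivity)]; congr 1; ring

end Weight

section Minkowski

/-- The `L^q(dt/t)` norm on the half line. -/
noncomputable def lqNorm (q : ℝ≥0∞) (F : ℝ → ℝ≥0∞) : ℝ≥0∞ :=
  if q = ∞ then ⨆ t ∈ Ioi (0 : ℝ), F t
  else (∫⁻ t in Ioi (0 : ℝ), F t ^ q.toReal / ENNReal.ofReal t) ^ q.toReal⁻¹

lemma lintegral_dilate {m : ℝ} (hm : 0 < m) {H : ℝ → ℝ≥0∞} (hH : Measurable H) :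
    ∫⁻ t in Ioi (0 : ℝ), H (m * t) / ENNReal.ofReal t =
      ∫⁻ t in Ioi (0 : ℝ), H t / ENNReal.ofReal t := by
  have hmeas : Measurable ((Ioi (0 : ℝ)).indicator fun t => H t / ENNReal.ofReal t) :=
    (by fun_prop : Measurable fun t => H t / ENNReal.ofReal t).indicator measurableSet_Ioi
  rw [← lintegral_indicator measurableSet_Ioi, ← lintegral_indicator measurableSet_Ioi]
  conv_rhs => rw [← Real.smul_map_volume_mul_left hm.ne']
  rw [lintegral_smul_measure, lintegral_map hmeas (by fun_prop), smul_eq_mul,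
    ← lintegral_const_mul' _ _ ENNReal.ofReal_ne_top]
  congr 1; ext t
  by_cases ht : 0 < t
  · rw [indicator_of_mem (by exact ht), indicator_of_mem (by exact mul_pos hm ht), abs_of_pos hm,
      ENNReal.ofReal_mul hm.le]
    have h1 : ENNReal.ofReal m ≠ 0 := by simpa using hm
    rw [div_eq_mul_inv, div_eq_mul_inv, ENNReal.mul_inv (Or.inl h1) (Or.inl ENNReal.ofReal_ne_top)]
    calc _ = (ENNReal.ofReal m * (ENNReal.ofReal m)⁻¹) * (H (m * t) * (ENNReal.ofReal t)⁻¹) := by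
          rw [ENNReal.mul_inv_cancel h1 ENNReal.ofReal_ne_top, one_mul]
      _ = _ := by ring
  · rw [indicator_of_notMem (by exact ht), indicator_of_notMem, mul_zero]
    simp only [mem_Ioi, not_lt]
    exact mul_nonpos_of_nonneg_of_nonpos hm.le (not_lt.1 ht)

lemma tsum_rpow_le {ι : Type*} (c a : ι → ℝ≥0∞) {r : ℝ} (hr : 1 ≤ r) :
    (∑' i, c i * a i) ^ r ≤ (∑' i, c i) ^ (r - 1) * ∑' i, c i * a i ^ r := by
  have hr0 : 0 < r := by linarith
  have hr1 : 0 ≤ 1 - r⁻¹ := by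
    have := inv_le_one_of_one_le₀ hr; linarith
  have h : ∑' i, c i * a i ≤ (∑' i, c i) ^ (1 - r⁻¹) * (∑' i, c i * a i ^ r) ^ r⁻¹ := by
    rw [ENNReal.tsum_eq_iSup_sum]
    refine iSup_le fun S => (ENNReal.inner_le_weight_mul_Lp_of_nonneg S hr c a).trans ?_
    have := ENNReal.sum_le_tsum (f := c) S
    have := ENNReal.sum_le_tsum (f := fun i => c i * a i ^ r) S
    gcongr
  refine (ENNReal.rpow_le_rpow h hr0.le).trans (le_of_eq ?_)
  rw [ENNReal.mul_rpow_of_nonneg _ _ hr0.le, ← ENNReal.rpow_mul, ← ENNReal.rpow_mul,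
    inv_mul_cancel₀ hr0.ne', ENNReal.rpow_one]
  congr 2
  field_simp

lemma lqNorm_le {ι : Type*} [Countable ι] (q : ℝ≥0∞) (hq : 1 ≤ q) (c : ι → ℝ≥0∞) (m : ι → ℝ)
    (hm : ∀ i, 0 < m i) (F G : ℝ → ℝ≥0∞) (hG : Measurable G)
    (h : ∀ t, 0 < t → F t ≤ ∑' i, c i * G (m i * t)) :
    lqNorm q F ≤ (∑' i, c i) * lqNorm q G := by
  unfold lqNorm
  split_ifs with hq'
  · refine iSup₂_le fun t ht => (h t ht).trans ?_
    rw [← ENNReal.tsum_mul_right]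
    refine ENNReal.tsum_le_tsum fun i => ?_
    gcongr
    exact le_iSup₂_of_le (m i * t) (mul_pos (hm i) ht) le_rfl
  · set r := q.toReal with hr
    have hr1 : 1 ≤ r := by
      have := ENNReal.toReal_mono hq' hq
      simpa using this
    have hr0 : 0 < r := by linarith
    have key : ∫⁻ t in Ioi (0 : ℝ), F t ^ r / ENNReal.ofReal t ≤
        (∑' i, c i) ^ r * ∫⁻ t in Ioi (0 : ℝ), G t ^ r / ENNReal.ofReal t := by
      calc ∫⁻ t in Ioi (0 : ℝ), F t ^ r / ENNReal.ofReal t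
          ≤ ∫⁻ t in Ioi (0 : ℝ), (∑' i, c i) ^ (r - 1) *
              ∑' i, c i * (G (m i * t) ^ r / ENNReal.ofReal t) := by
            refine setLIntegral_mono' measurableSet_Ioi fun t ht => ?_
            calc F t ^ r / ENNReal.ofReal t
                ≤ ((∑' i, c i) ^ (r - 1) * ∑' i, c i * G (m i * t) ^ r) / ENNReal.ofReal t := by
                  gcongr
                  exact (ENNReal.rpow_le_rpow (h t ht) hr0.le).trans (tsum_rpow_le _ _ hr1)
              _ = _ := by
                  simp only [div_eq_mul_inv, mul_assoc, ← ENNReal.tsum_mul_right]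
        _ = (∑' i, c i) ^ (r - 1) * ∑' i, c i *
              ∫⁻ t in Ioi (0 : ℝ), G (m i * t) ^ r / ENNReal.ofReal t := by
            have hmi : ∀ i, Measurable fun t => G (m i * t) ^ r / ENNReal.ofReal t := by
              intro i; fun_prop
            rw [lintegral_const_mul, lintegral_tsum]
            · congr 2; ext i
              rw [lintegral_const_mul _ (hmi i)]
            · intro i; exact ((hmi i).const_mul _).aemeasurable
            · exact Measurable.ennreal_tsum fun i => (hmi i).const_mul _
        _ = (∑' i, c i) ^ (r - 1) * ((∑' i, c i) *
              ∫⁻ t in Ioi (0 : ℝ), G t ^ r / ENNReal.ofReal t) := by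
            rw [← ENNReal.tsum_mul_right]
            congr 2; ext i
            rw [lintegral_dilate (hm i) (H := fun t => G t ^ r) (by fun_prop)]
        _ = _ := by
            rw [← mul_assoc]
            congr 1
            nth_rewrite 2 [← ENNReal.rpow_one (∑' i, c i)]
            rw [← ENNReal.rpow_add_of_nonneg _ _ (by linarith) zero_le_one, sub_add_cancel]
    refine (ENNReal.rpow_le_rpow key (inv_nonneg.2 hr0.le)).trans (le_of_eq ?_)
    rw [ENNReal.mul_rpow_of_nonneg _ _ (inv_nonneg.2 hr0.le), ← ENNReal.rpow_mul,
      mul_inv_cancel₀ hr0.ne', ENNReal.rpow_one]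

end Minkowski

/-- Hardy–Sobolev inequality in Lorentz spaces on ℝⁿ: for `0 ≤ l ≤ p` and
`p*(l) = p(n-l)/(n-p)`, `‖|x|^{-l/p*(l)} f‖_{p*(l),q} ≤ C ‖|∇f|‖_{p,q}`. -/
theorem stmt_12 (n : ℕ) (hn : 2 ≤ n) (p : ℝ) (hp1 : 1 < p) (hpn : p < n)
    (q : ℝ≥0∞) (hq : 1 ≤ q) (l : ℝ) (hl0 : 0 ≤ l) (hlp : l ≤ p) :
    ∃ C : ℝ, 0 < C ∧ ∀ f : EuclideanSpace ℝ (Fin n) → ℝ,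
      ContDiff ℝ (⊤ : ℕ∞) f → HasCompactSupport f →
      lorentz volume (ENNReal.ofReal (p * ((n : ℝ) - l) / ((n : ℝ) - p))) q
          (fun x => ‖x‖ ^ (-(l / (p * ((n : ℝ) - l) / ((n : ℝ) - p)))) * f x) ≤
        ENNReal.ofReal C *
          lorentz volume (ENNReal.ofReal p) q (fun x => ‖gradient f x‖) := by
  have hn0 : (0 : ℝ) < n := by linarith
  set P : ℝ := p * ((n : ℝ) - l) / ((n : ℝ) - p) with hP
  have hnp : 0 < (n : ℝ) - p := by linarith
  have hnl : 0 < (n : ℝ) - l := by linarith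
  have hP0 : 0 < P := by positivity
  have hexp : P⁻¹ + -(l / P / n) = p⁻¹ - (n : ℝ)⁻¹ := by
    rw [hP]; field_simp; ring
  obtain ⟨K, hK⟩ := rearr_weight n hn (l / P) (by positivity)
  obtain ⟨C, hC⟩ := rearr_sum n hn
  set x : ℝ := 2 ^ ((n : ℝ)⁻¹ - p⁻¹) with hx
  set y : ℝ := 2 ^ (p⁻¹ - 1) with hy
  have hx0 : 0 < x := by positivity
  have hy0 : 0 < y := by positivity
  have hx1 : x < 1 := by
    apply Real.rpow_lt_one_of_one_lt_of_neg one_lt_two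
    have := inv_strictAnti₀ (by linarith : 0 < p) hpn
    linarith
  have hy1 : y < 1 := by
    apply Real.rpow_lt_one_of_one_lt_of_neg one_lt_two
    have := inv_lt_one_of_one_lt₀ hp1
    linarith
  set A : ℝ := K * C * 2 ^ (2 - (n : ℝ)⁻¹) with hA
  have hA0 : 0 ≤ A := by positivity
  set c : ℕ × ℕ → ℝ≥0∞ := fun i => ENNReal.ofReal (A * (x ^ i.1 * y ^ i.2)) with hc
  have hcsum : Summable fun i : ℕ × ℕ => A * (x ^ i.1 * y ^ i.2) :=
    (Summable.mul_of_nonneg (summable_geometric_of_lt_one hx0.le hx1)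
      (summable_geometric_of_lt_one hy0.le hy1) (fun _ => by positivity)
      (fun _ => by positivity)).mul_left A
  have hctop : ∑' i, c i ≠ ⊤ := hcsum.tsum_ofReal_ne_top
  refine ⟨(∑' i, c i).toReal + 1, by positivity, fun f hf hfc => ?_⟩
  set g : EuclideanSpace ℝ (Fin n) → ℝ := fun x => ‖gradient f x‖ with hg
  have main : lqNorm q (fun t => ENNReal.ofReal t ^ (ENNReal.ofReal P).toReal⁻¹ *
        rearr volume (fun x => ‖x‖ ^ (-(l / P)) * f x) t) ≤
      (∑' i, c i) * lqNorm q (fun t => ENNReal.ofReal t ^ (ENNReal.ofReal p).toReal⁻¹ *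
        rearr volume g t) := by
    refine lqNorm_le q hq c (fun i => 2 ^ i.1 / 2 ^ i.2) (fun i => by positivity) _ _ ?_ ?_
    · have := (rearr_anti (μ := volume) (f := g)).measurable
      fun_prop
    · intro t ht
      rw [ENNReal.toReal_ofReal hP0.le, ENNReal.toReal_ofReal (by linarith : 0 ≤ p)]
      have h1 := (hK f t ht).trans (mul_le_mul_right (hC f hf hfc (t / 2) (by positivity)) _)
      refine (mul_le_mul_right h1 _).trans (le_of_eq ?_)
      simp only [← ENNReal.tsum_mul_left]
      rw [← ENNReal.tsum_prod]
      congr 1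
      ext ⟨k, j⟩
      simp only [hc]
      have e1 : 2 * ((2:ℝ) ^ k * (t / 2)) / 2 ^ j = 2 ^ k / 2 ^ j * t := by ring
      rw [e1]
      simp only [← mul_assoc]
      congr 1
      rw [← ENNReal.ofReal_coe_nnreal (p := K), ← ENNReal.ofReal_coe_nnreal (p := C),
        ENNReal.ofReal_rpow_of_pos ht, ENNReal.ofReal_rpow_of_pos ht,
        ENNReal.ofReal_rpow_of_pos (by positivity), ENNReal.ofReal_rpow_of_pos (by positivity)]
      repeat rw [← ENNReal.ofReal_mul (by positivity)]
      congr 1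
      have e2 : t ^ P⁻¹ * t ^ (-(l / P / n)) * (2 ^ k * (t / 2)) ^ ((n : ℝ)⁻¹ - 1) *
          (2 * (2 * (2 ^ k * (t / 2))) / 2 ^ j) = 2 ^ (2 - (n : ℝ)⁻¹) * (x ^ k * y ^ j) *
          (2 ^ k / 2 ^ j * t) ^ p⁻¹ := by
        rw [← Real.rpow_add ht, hexp]
        apply Real.log_injOn_pos (by simp only [mem_Ioi]; positivity)
          (by simp only [mem_Ioi]; positivity)
        have l1 : Real.log x = ((n : ℝ)⁻¹ - p⁻¹) * Real.log 2 := Real.log_rpow two_pos _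
        have l2 : Real.log y = (p⁻¹ - 1) * Real.log 2 := Real.log_rpow two_pos _
        have e3 : 2 * (2 * ((2:ℝ) ^ k * (t / 2))) / 2 ^ j = 2 * (2 ^ k * t) / 2 ^ j := by ring
        rw [e3]
        rw [Real.log_mul (by positivity) (by positivity), Real.log_mul (by positivity) (by positivity),
          Real.log_mul (by positivity) (by positivity), Real.log_mul (by positivity) (by positivity),
          Real.log_mul (by positivity) (by positivity),
          Real.log_rpow ht, Real.log_rpow (by positivity), Real.log_rpow (by positivity),
          Real.log_rpow (by positivity),
          Real.log_mul (by positivity) (by positivity), Real.log_div (by positivity) (by positivity),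
          Real.log_div (by positivity) (by positivity),
          Real.log_mul (by positivity) (by positivity), Real.log_mul (by positivity) (by positivity),
          Real.log_mul (by positivity) (by positivity), Real.log_div (by positivity) (by positivity)]
        simp only [Real.log_pow, l1, l2]
        ring
      calc _ = K * C * (t ^ P⁻¹ * t ^ (-(l / P / n)) * (2 ^ k * (t / 2)) ^ ((n : ℝ)⁻¹ - 1) *
          (2 * (2 * (2 ^ k * (t / 2))) / 2 ^ j)) := by ring
        _ = _ := by rw [e2, hA]; ring
  refine main.trans ?_
  change _ ≤ _ * lqNorm q _
  gcongr
  rw [← ENNReal.ofReal_toReal hctop]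
  apply ENNReal.ofReal_le_ofReal
  rw [ENNReal.ofReal_toReal hctop]
  linarith
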